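/- Let d ≥ 2, δ ≥ 2, and 0 < s < d be integers, and let G be a finite simple graph with a proper white/black 2-coloring. Suppose there exists a set X of edges of G such that every white vertex of degree exactly d is incident to at most d−1 edges of X, and every black vertex of degree exactly δ is incident to at least one edge of X. Then there exists a labeling of the edges of G solving FDSO(s). -/

import Mathlib

/-- The four-letter alphabet `Σ = {A, H, T, X}`. -/
inductive Sig : Type
  | A | H | T | X
deriving DecidableEq

instance : Fintype Sig where
  elems := {Sig.A, Sig.H, Sig.T, Sig.X}
  complete := by intro x; cases x <;> decide

/-- The multiset of labels assigned by `c` to the edges incident to `v`. -/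
def edgeLabels {V : Type*} [Fintype V] [DecidableEq V] (G : SimpleGraph V)
    [DecidableRel G.Adj] (c : Sym2 V → Sig) (v : V) : Multiset Sig :=
  (G.neighborFinset v).val.map (fun u => c s(v, u))

/-- The edge labeling `c` solves `FDSO(s)` on the properly 2-colored graph `G`: every white
vertex of degree exactly `d` sees one `A` and `d-1` `X`'s, or `s+1` `H`'s and `d-s-1` `X`'s,
or `d-s+1` `T`'s and `s-1` `X`'s; every black vertex of degree exactly `δ` sees at least one
`X`, or at least one `H` and at least one `T`. -/
def SolvesFDSO {V : Type*} [Fintype V] [DecidableEq V] (G : SimpleGraph V)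
    [DecidableRel G.Adj] (color : V → Bool) (d δ s : ℕ) (c : Sym2 V → Sig) : Prop :=
  (∀ v : V, color v = true → G.degree v = d →
    (edgeLabels G c v = Sig.A ::ₘ Multiset.replicate (d - 1) Sig.X ∨
     edgeLabels G c v =
       Multiset.replicate (s + 1) Sig.H + Multiset.replicate (d - s - 1) Sig.X ∨
     edgeLabels G c v =
       Multiset.replicate (d - s + 1) Sig.T + Multiset.replicate (s - 1) Sig.X)) ∧
  (∀ v : V, color v = false → G.degree v = δ →
    (Sig.X ∈ edgeLabels G c v ∨
      (Sig.H ∈ edgeLabels G c v ∧ Sig.T ∈ edgeLabels G c v)))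

/-- The number of edges of `X` incident to `v` (edges of the graph `G`). -/
def degIn {V : Type*} [Fintype V] [DecidableEq V] (G : SimpleGraph V) [DecidableRel G.Adj]
    (X : Finset (Sym2 V)) (v : V) : ℕ :=
  ((G.neighborFinset v).filter (fun u => s(v, u) ∈ X)).card

/-- If a properly 2-colored finite graph admits a solution to the bipartite
sinkless orientation problem (white degree-`d` vertices incident to at most `d-1` edges of
`X`; black degree-`δ` vertices incident to at least one edge of `X`), then it admits an edge
labeling solving `FDSO(s)`. -/
theorem stmt_16 {V : Type*} [Fintype V] [DecidableEq V]
    (G : SimpleGraph V) [DecidableRel G.Adj]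
    (d δ s : ℕ) (hd : 2 ≤ d) (hδ : 2 ≤ δ) (hs0 : 0 < s) (hsd : s < d)
    (color : V → Bool)
    (hproper : ∀ ⦃u v : V⦄, G.Adj u v → color u ≠ color v)
    (hX : ∃ X : Finset (Sym2 V), ↑X ⊆ G.edgeSet ∧
      (∀ v : V, color v = true → G.degree v = d → degIn G X v ≤ d - 1) ∧
      (∀ v : V, color v = false → G.degree v = δ → 1 ≤ degIn G X v)) :
    ∃ c : Sym2 V → Sig, SolvesFDSO G color d δ s c := by
  classical
  obtain ⟨X, hXG, hw, hb⟩ := hX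
  have key : ∀ w : V, ∃ u : V, color w = true → G.degree w = d →
      G.Adj w u ∧ s(w, u) ∉ X := by
    intro w
    by_cases h : color w = true ∧ G.degree w = d
    · have h1 := hw w h.1 h.2
      by_contra hcon
      push Not at hcon
      have h2 : degIn G X w = d := by
        unfold degIn
        rw [Finset.filter_true_of_mem, G.card_neighborFinset_eq_degree, h.2]
        intro u hu
        exact (hcon u).2.2 ((G.mem_neighborFinset w u).1 hu)
      omega
    · exact ⟨w, fun h1 h2 => absurd ⟨h1, h2⟩ h⟩
  choose f hf using key
  refine ⟨fun e => if ∃ w, color w = true ∧ G.degree w = d ∧ e = s(w, f w)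
    then Sig.A else Sig.X, ?_, ?_⟩
  · intro v hv hdv
    left
    obtain ⟨hadj, -⟩ := hf v hv hdv
    have hmem : f v ∈ G.neighborFinset v := (G.mem_neighborFinset v _).2 hadj
    unfold edgeLabels
    rw [← Finset.insert_erase hmem, Finset.insert_val_of_notMem (Finset.notMem_erase _ _),
      Multiset.map_cons]
    congr 1
    · exact if_pos ⟨v, hv, hdv, rfl⟩
    · rw [Multiset.eq_replicate]
      refine ⟨?_, ?_⟩
      · rw [Multiset.card_map, Finset.card_val, Finset.card_erase_of_mem hmem,
          G.card_neighborFinset_eq_degree, hdv]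
      · intro b hbm
        obtain ⟨u, hu, rfl⟩ := Multiset.mem_map.1 hbm
        have hu' := Finset.mem_erase.1 (show u ∈ (G.neighborFinset v).erase (f v) from hu)
        refine if_neg ?_
        rintro ⟨w, hwc, hwd, he⟩
        rcases Sym2.eq_iff.1 he with ⟨h1, h2⟩ | ⟨h1, h2⟩
        · subst h1
          exact hu'.1 h2
        · have := hproper (hf w hwc hwd).1
          rw [← h1, hwc, hv] at this
          exact this rfl
  · intro v hv hdv
    left
    obtain ⟨u, hu⟩ := Finset.card_pos.1 (hb v hv hdv)
    obtain ⟨hu1, hu2⟩ := Finset.mem_filter.1 hu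
    refine Multiset.mem_map.2 ⟨u, hu1, if_neg ?_⟩
    rintro ⟨w, hwc, hwd, he⟩
    exact (hf w hwc hwd).2 (he ▸ hu2)
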